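/- Let L be a prime number. For c = (c₀, …, c_{L−1}) ∈ ℂ^L, extended L-periodically (c_k = c_{k mod L}), define the L × L² matrix A_c whose columns are indexed by pairs (k, m) ∈ {0, …, L−1}² and whose entries are [A_c]_{p,(k,m)} = c_{(k−p) mod L} · e^{2πi p m / L} for p ∈ {0, …, L−1}. Then for Lebesgue-almost every c ∈ ℂ^L (identifying ℂ^L with ℝ^{2L}), every L × L submatrix of A_c is invertible. -/

import Mathlib

open MeasureTheory

/-!
The determinant of an `L × L` submatrix is a polynomial in `c`, so it suffices to show that this
polynomial is not zero. In its Leibniz expansion the permutation `σ` contributes the monomial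
`∏ p, c (k (σ p) - p)`, where `k q` is the translation of the `q`-th column. Let `σ` give the
lexicographically largest monomial. An exchange argument shows that any `τ` giving the same monomial
satisfies `k ∘ τ = k ∘ σ`, so up to sign the coefficient of this monomial is a product of minors of
the Fourier matrix, one for each translation. These do not vanish, by Chebotarev's theorem on roots
of unity of prime order `L`.

For Chebotarev's theorem, extend the `L`-adic valuation: in a valuation ring with residue
characteristic `L` every `L`-th root of unity reduces to `1`. A kernel vector of an `n × n` minor,
scaled to be primitive, gives a polynomial with `n` terms and `n` distinct roots of unity as zeros.
Its reduction is nonzero and divisible by `(X - 1) ^ n`, which is impossible for `n` terms whose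
exponents are distinct modulo `L`.
-/

section AlmostEverywhere

variable {R ι : Type*} [CommRing R] [MeasurableSpace R] [MeasurableAdd₂ R] [MeasurableMul₂ R]

theorem measurable_mvPolynomial_eval (P : MvPolynomial ι R) :
    Measurable fun x : ι → R => MvPolynomial.eval x P := by
  simp only [MvPolynomial.eval_eq]
  fun_prop

variable [IsDomain R] [MeasurableSingletonClass R]

theorem ae_mvPolynomial_eval_ne_zero_option [Fintype ι] (μ : Option ι → Measure R)
    [∀ i, SigmaFinite (μ i)] [NullSingletonClass (μ none)]
    (ih : ∀ Q : MvPolynomial ι R, Q ≠ 0 →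
      ∀ᵐ x ∂Measure.pi fun i => μ (some i), MvPolynomial.eval x Q ≠ 0)
    {P : MvPolynomial (Option ι) R} (hP : P ≠ 0) :
    ∀ᵐ x ∂Measure.pi μ, MvPolynomial.eval x P ≠ 0 := by
  have hmeas : MeasurableSet {x | MvPolynomial.eval x P ≠ 0} :=
    measurable_mvPolynomial_eval P (measurableSet_singleton 0).compl
  let e := MeasurableEquiv.piOptionEquivProd fun _ : Option ι => R
  have he (z : (ι → R) × R) : e.symm z = fun i => i.elim z.2 z.1 := by
    rw [e.symm_apply_eq]; rfl
  have hmeas' : MeasurableSet {z | MvPolynomial.eval (e.symm z) P ≠ 0} := e.symm.measurable hmeas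
  rw [← Measure.pi_map_piOptionEquivProd μ, ae_map_iff e.symm.measurable.aemeasurable hmeas,
    Measure.ae_prod_iff_ae_ae hmeas']
  let Q := MvPolynomial.optionEquivLeft R ι P
  have hQ : Q.leadingCoeff ≠ 0 := by simpa [Q] using hP
  filter_upwards [ih _ hQ] with y hy
  have hQy : Q.map (MvPolynomial.eval y) ≠ 0 := fun h =>
    hy (by simpa using congrArg (Polynomial.coeff · Q.natDegree) h)
  have hroots := Polynomial.finite_setOfPred_isRoot hQy
  filter_upwards [measure_eq_zero_iff_ae_notMem.mp (hroots.measure_zero (μ none))] with t ht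
  rw [he, MvPolynomial.optionEquivLeft_elim_eval]
  exact ht

theorem ae_mvPolynomial_eval_ne_zero [Fintype ι] (μ : ι → Measure R) [∀ i, SigmaFinite (μ i)]
    [∀ i, NullSingletonClass (μ i)] {P : MvPolynomial ι R} (hP : P ≠ 0) :
    ∀ᵐ x ∂Measure.pi μ, MvPolynomial.eval x P ≠ 0 := by
  refine Fintype.induction_empty_option
    (P := fun ι _ => ∀ (μ : ι → Measure R) [∀ i, SigmaFinite (μ i)]
      [∀ i, NullSingletonClass (μ i)] (P : MvPolynomial ι R), P ≠ 0 →
        ∀ᵐ x ∂Measure.pi μ, MvPolynomial.eval x P ≠ 0) ?_ ?_ ?_ ι μ P hP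
  · intro α β _ e ih μ _ _ P hP
    let : Fintype α := .ofEquiv β e.symm
    have hmeas : MeasurableSet {x | MvPolynomial.eval x P ≠ 0} :=
      measurable_mvPolynomial_eval P (measurableSet_singleton 0).compl
    have hmp := measurePreserving_piCongrLeft μ e
    rw [← hmp.map_eq, ae_map_iff hmp.measurable.aemeasurable hmeas]
    have hrename : MvPolynomial.rename e.symm P ≠ 0 :=
      (map_ne_zero_iff _ (MvPolynomial.rename_injective _ e.symm.injective)).mpr hP
    filter_upwards [ih (fun i => μ (e i)) _ hrename] with x hx
    have hcomp : x ∘ e.symm = MeasurableEquiv.piCongrLeft (fun _ => R) e x := by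
      ext i
      obtain ⟨j, rfl⟩ := e.surjective i
      simp [MeasurableEquiv.piCongrLeft, Equiv.piCongrLeft_apply_apply]
    rwa [MvPolynomial.eval_rename, hcomp] at hx
  · intro μ _ _ P hP
    rw [P.eq_C_of_isEmpty] at hP ⊢
    exact .of_forall fun x => by simpa using hP
  · intro α _ ih μ _ _ P hP
    exact ae_mvPolynomial_eval_ne_zero_option μ (ih fun i => μ (some i)) hP

end AlmostEverywhere

section SparsePolynomial

open Polynomial

variable {R ι : Type*} [CommRing R] [Fintype ι] {c : ι → R} {e : ι → ℕ}

theorem X_mul_derivative_sum_C_mul_X_pow (c : ι → R) (e : ι → ℕ) :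
    X * derivative (∑ i, C (c i) * X ^ e i) = ∑ i, C (c i * e i) * X ^ e i := by
  rw [derivative_sum, Finset.mul_sum]
  refine Finset.sum_congr rfl fun i _ => ?_
  rw [derivative_C_mul_X_pow]
  cases e i with
  | zero => simp
  | succ n => simp only [Nat.add_sub_cancel, C_mul, pow_succ']; ring

theorem sum_mul_natCast_pow_eq_zero_of_X_sub_one_pow_dvd {n j : ℕ} (hj : j < n)
    (h : (X - 1 : R[X]) ^ n ∣ ∑ i, C (c i) * X ^ e i) : ∑ i, c i * (e i : R) ^ j = 0 := by
  induction j generalizing n c with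
  | zero =>
    have heval := eval_dvd (x := 1) h
    simpa [eval_finsetSum, hj.ne'] using heval
  | succ j ih =>
    have hderiv := (pow_sub_one_dvd_derivative_of_pow_dvd h).mul_left X
    rw [X_mul_derivative_sum_C_mul_X_pow] at hderiv
    simpa only [pow_succ', mul_assoc] using ih (Nat.lt_sub_of_add_lt hj) hderiv

theorem eq_zero_of_X_sub_one_pow_card_dvd [IsDomain R] (he : Function.Injective fun i => (e i : R))
    (h : (X - 1 : R[X]) ^ Fintype.card ι ∣ ∑ i, C (c i) * X ^ e i) : c = 0 := by
  let r := Fintype.equivFin ι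
  have hvandermonde : c ∘ r.symm = 0 :=
    Matrix.eq_zero_of_forall_pow_sum_mul_pow_eq_zero (he.comp r.symm.injective) fun j =>
      (r.symm.sum_comp fun i => c i * (e i : R) ^ (j : ℕ)).trans
        (sum_mul_natCast_pow_eq_zero_of_X_sub_one_pow_dvd j.isLt h)
  exact r.symm.surjective.injective_comp_right hvandermonde

theorem prod_X_sub_C_dvd_of_eval_eq_zero [IsDomain R] {z : ι → R} (hz : Function.Injective z)
    {f : R[X]} (hf : ∀ i, f.eval (z i) = 0) : ∏ i, (X - C (z i)) ∣ f := by
  obtain rfl | hf0 := eq_or_ne f 0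
  · exact dvd_zero _
  have hroots : Finset.univ.val.map z ≤ f.roots := by
    rw [Multiset.le_iff_subset (Finset.univ.nodup.map hz)]
    intro x hx
    obtain ⟨i, -, rfl⟩ := Multiset.mem_map.mp hx
    exact (mem_roots hf0).mpr (hf i)
  simpa only [Multiset.map_map] using! (Multiset.prod_X_sub_C_dvd_iff_le_roots hf0 _).mpr hroots

theorem map_eq_zero_of_sum_mul_pow_eq_zero {k : Type*} [IsDomain R] [CommRing k] [IsDomain k]
    (φ : R →+* k) (he : Function.Injective fun i => (e i : k)) {z : ι → R}
    (hz : Function.Injective z) (hφz : ∀ i, φ (z i) = 1)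
    (h : ∀ i, ∑ j, c j * z i ^ e j = 0) (j : ι) : φ (c j) = 0 := by
  have hdvd : ∏ i, (X - C (z i)) ∣ ∑ j, C (c j) * X ^ e j :=
    prod_X_sub_C_dvd_of_eval_eq_zero hz fun i => by simpa [eval_finsetSum] using h i
  have hreduction : (X - 1 : k[X]) ^ Fintype.card ι ∣ ∑ j, C (φ (c j)) * X ^ e j := by
    simpa [Polynomial.map_prod, Polynomial.map_sum, hφz] using Polynomial.map_dvd φ hdvd
  exact congrFun (eq_zero_of_X_sub_one_pow_card_dvd he hreduction) j

end SparsePolynomial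

section Chebotarev

variable {K : Type*} [Field K]

theorem exists_valuationSubring_charP_residueField (K : Type*) [Field K] [CharZero K] {p : ℕ}
    (hp : p.Prime) : ∃ V : ValuationSubring K, CharP (IsLocalRing.ResidueField V) p := by
  have hspan : Ideal.span {(p : (⊥ : Subring K))} ≠ ⊤ := by
    rw [Ne, Ideal.span_singleton_eq_top, isUnit_iff_exists_inv]
    rintro ⟨⟨b, hb⟩, hpb⟩
    obtain ⟨n, rfl⟩ := Subring.mem_bot.mp hb
    have hpnK : (p : K) * n = 1 := congrArg Subtype.val hpb
    have hpn : (p : ℤ) * n = 1 := by exact_mod_cast hpnK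
    exact (Nat.prime_iff_prime_int.mp hp).not_isUnit (.of_mul_eq_one _ hpn)
  obtain ⟨V, -, hV⟩ := Ideal.image_subset_nonunits_valuationSubring _ hspan
  have hpV : (p : V) ∈ IsLocalRing.maximalIdeal V :=
    ValuationSubring.coe_mem_nonunits_iff.mp
      (hV ⟨(p : (⊥ : Subring K)), Ideal.subset_span rfl, by simp⟩)
  refine ⟨V, (CharP.charP_iff_prime_eq_zero hp).mpr ?_⟩
  simpa using (IsLocalRing.residue_eq_zero_iff (p : V)).mpr hpV

theorem exists_eq_mul_valuationSubring (V : ValuationSubring K) {ι : Type*} [Finite ι] {v : ι → K}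
    (hv : v ≠ 0) : ∃ a ≠ 0, ∃ u : ι → V, (∀ i, v i = a * u i) ∧ ∃ j, u j = 1 := by
  obtain ⟨i, hi⟩ := Function.ne_iff.mp hv
  have : Nonempty ι := ⟨i⟩
  obtain ⟨j, hj⟩ := Finite.exists_max fun i => V.valuation (v i)
  have hvj : v j ≠ 0 := by
    rw [Pi.zero_apply, ← V.valuation.ne_zero_iff, ← zero_lt_iff] at hi
    exact V.valuation.ne_zero_iff.mp (hi.trans_le (hj i)).ne'
  have hmem (i : ι) : v i / v j ∈ V := by
    rw [← V.valuation_le_one_iff, map_div₀]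
    exact div_le_one_of_le₀ (hj i) zero_le
  exact ⟨v j, hvj, fun i => ⟨v i / v j, hmem i⟩, fun i => (mul_div_cancel₀ _ hvj).symm, j,
    Subtype.ext (div_self hvj)⟩

theorem eq_one_of_pow_char_eq_one {R : Type*} [CommRing R] [IsReduced R] {p : ℕ} [ExpChar R p]
    {x : R} (hx : x ^ p = 1) : x = 1 := by
  simpa using (ExpChar.pow_prime_pow_mul_eq_one_iff p 1 1 x).mp (by simpa using hx)

theorem det_pow_mul_ne_zero_of_prime [CharZero K] {p : ℕ} (hp : p.Prime) {ω : K}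
    (hω : IsPrimitiveRoot ω p) {ι : Type*} [Fintype ι] [DecidableEq ι] {a b : ι → ℕ}
    (ha : Function.Injective fun i => (a i : ZMod p))
    (hb : Function.Injective fun i => (b i : ZMod p)) :
    (Matrix.of fun i j => ω ^ (a i * b j)).det ≠ 0 := by
  intro hdet
  obtain ⟨v, hv, hker⟩ := Matrix.exists_mulVec_eq_zero_iff.mpr hdet
  obtain ⟨V, _⟩ := exists_valuationSubring_charP_residueField K hp
  obtain ⟨s, hs, u, hvu, j, huj⟩ := exists_eq_mul_valuationSubring V hv
  obtain ⟨w, rfl⟩ : ∃ w : V, (w : K) = ω :=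
    IsIntegrallyClosed.algebraMap_eq_of_integral ((hω.isIntegral hp.pos).tower_top (A := V))
  replace hω : IsPrimitiveRoot w p := hω.of_map_of_injective (f := V.subtype) V.subtype_injective
  have : ExpChar (IsLocalRing.ResidueField V) p := .prime hp
  have hresidue : IsLocalRing.residue V w = 1 :=
    eq_one_of_pow_char_eq_one (p := p) (by rw [← map_pow, hω.pow_eq_one, map_one])
  have hnodes : Function.Injective fun i => w ^ a i := fun i i' h =>
    ha ((ZMod.natCast_eq_natCast_iff ..).mpr (by
      rwa [(hω.isOfFinOrder hp.ne_zero).pow_eq_pow_iff_modEq, ← hω.eq_orderOf] at h))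
  have hexponents : Function.Injective fun j => (b j : IsLocalRing.ResidueField V) := fun j j' h =>
    hb ((ZMod.natCast_eq_natCast_iff ..).mpr ((CharP.natCast_eq_natCast _ p).mp h))
  have hzero (i : ι) : ∑ j, u j * (w ^ a i) ^ b j = 0 := by
    have hrow : s * ∑ j, (u j : K) * (w : K) ^ (a i * b j) = 0 := by
      refine Eq.trans ?_ (congrFun hker i)
      rw [Finset.mul_sum, Matrix.mulVec, dotProduct]
      exact Finset.sum_congr rfl fun j _ => by rw [hvu, Matrix.of_apply]; ring
    apply V.subtype_injective
    simpa [pow_mul] using (mul_eq_zero.mp hrow).resolve_left hs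
  simpa [huj] using map_eq_zero_of_sum_mul_pow_eq_zero (IsLocalRing.residue V) hexponents hnodes
    (fun i => by rw [map_pow, hresidue, one_pow]) hzero j

end Chebotarev

section TransversalDegree

theorem exists_apply_eq_and_apply_ne {ι κ : Type*} [Finite ι] {k : ι → κ}
    {σ τ : Equiv.Perm ι} {p : ι} (hp : k (σ p) ≠ k (τ p)) :
    ∃ q, k (τ q) = k (σ p) ∧ k (σ q) ≠ k (σ p) := by
  classical
  have := Fintype.ofFinite ι
  by_contra! hsub
  have hcard : ({q | k (σ q) = k (σ p)} : Finset ι).card ≤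
      ({q | k (τ q) = k (σ p)} : Finset ι).card :=
    (Finset.card_equiv (σ.trans τ.symm) (by simp)).le
  have heq := Finset.eq_of_subset_of_card_le
    (Finset.monotone_filter_right Finset.univ fun q _ => hsub q) hcard
  have hmem : p ∈ ({q | k (τ q) = k (σ p)} : Finset ι) := by
    rw [heq]; simp
  exact hp ((Finset.mem_filter_univ p).mp hmem).symm

open Finsupp (single)

variable {ι κ α : Type*} [Fintype ι]

/-- The exponent vector of the monomial `∏ p, X (d p (g p))`: the variable at position `(p, x)` of
the array `d` is `X (d p x)`, and the transversal `g` picks one position in each row. -/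
noncomputable def transversalDegree (d : ι → κ → α) (g : ι → κ) : α →₀ ℕ :=
  ∑ p, single (d p (g p)) 1

theorem transversalDegree_comp_swap_add [DecidableEq ι] (d : ι → κ → α) (g : ι → κ) {p q : ι}
    (hpq : p ≠ q) :
    transversalDegree d (g ∘ Equiv.swap p q) + (single (d p (g p)) 1 + single (d q (g q)) 1) =
      transversalDegree d g + (single (d p (g q)) 1 + single (d q (g p)) 1) := by
  have hcompl : ∑ x ∈ ({p, q} : Finset ι)ᶜ, single (d x (g (Equiv.swap p q x))) 1 =
      ∑ x ∈ ({p, q} : Finset ι)ᶜ, single (d x (g x)) 1 :=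
    Finset.sum_congr rfl fun x hx => by
      simp only [Finset.mem_compl, Finset.mem_insert, Finset.mem_singleton, not_or] at hx
      rw [Equiv.swap_apply_of_ne_of_ne hx.1 hx.2]
  simp only [transversalDegree, Function.comp_apply,
    ← Finset.sum_add_sum_compl ({p, q} : Finset ι) fun x => single (d x _) 1,
    Finset.sum_pair hpq, Equiv.swap_apply_left, Equiv.swap_apply_right, hcompl]
  abel

theorem toLex_single_add_single_lt [LinearOrder α] {a b c : α} (hb : a < b) (hc : a < c)
    (f : α →₀ ℕ) : toLex (single b 1 + single c 1) < toLex (single a 1 + f) := by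
  have hlt : toLex (single b 1 + single c 1) < toLex (single a 1) :=
    Finsupp.Lex.lt_iff.mpr ⟨a, fun j hj => by
      simp [hj.ne, (hj.trans hb).ne, (hj.trans hc).ne], by simp [hb.ne, hc.ne]⟩
  exact hlt.trans_le (Finsupp.toLex_monotone le_self_add)

theorem toLex_transversalDegree_lt_comp_swap [DecidableEq ι] [LinearOrder α] {d : ι → κ → α}
    {g : ι → κ} {p q : ι} (hp : d p (g q) < d p (g p)) (hq : d p (g q) < d q (g q)) :
    toLex (transversalDegree d g) < toLex (transversalDegree d (g ∘ Equiv.swap p q)) := by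
  have hpq : p ≠ q := by rintro rfl; exact hp.false
  have hpairs := toLex_single_add_single_lt hp hq (single (d q (g p)) 1)
  refine lt_of_add_lt_add_right (a := toLex (single (d p (g p)) 1 + single (d q (g q)) 1)) ?_
  rw [← toLex_add, ← toLex_add, transversalDegree_comp_swap_add d g hpq, toLex_add, toLex_add]
  exact add_lt_add_right hpairs _

variable [LinearOrder α] {d : ι → κ → α} {k : ι → κ} {σ τ : Equiv.Perm ι}

/- The smallest variable is the most significant one for `toLex`. If there were no such `q`, then
composing `τ` with a transposition would exchange two variables of its monomial for two others, of
which `d p (k (σ p))` is smaller than both of those removed. -/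
theorem exists_lt_of_forall_transversalDegree_le (hrow : ∀ p, Function.Injective (d p))
    (hcol : ∀ x, Function.Injective fun p => d p x)
    (hτ : ∀ ρ : Equiv.Perm ι,
      toLex (transversalDegree d (k ∘ ρ)) ≤ toLex (transversalDegree d (k ∘ τ)))
    {p : ι} (hp : k (σ p) ≠ k (τ p)) :
    ∃ q, k (σ q) ≠ k (τ q) ∧ d q (k (τ q)) < d p (k (σ p)) := by
  classical
  by_contra! hmin
  obtain ⟨q, hτq, hσq⟩ := exists_apply_eq_and_apply_ne hp
  have hltp : d p (k (τ q)) < d p (k (τ p)) := by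
    rw [hτq]
    exact (hmin p hp).lt_of_ne ((hrow p).ne hp)
  have hltq : d p (k (τ q)) < d q (k (τ q)) := by
    refine lt_of_le_of_ne ?_ ((hcol _).ne ?_)
    · simpa only [hτq] using hmin q (by rwa [hτq])
    · rintro rfl
      exact hσq rfl
  exact (hτ (τ * Equiv.swap p q)).not_gt (toLex_transversalDegree_lt_comp_swap hltp hltq)

theorem comp_eq_of_forall_transversalDegree_le (hrow : ∀ p, Function.Injective (d p))
    (hcol : ∀ x, Function.Injective fun p => d p x)
    (hσ : ∀ ρ : Equiv.Perm ι,
      toLex (transversalDegree d (k ∘ ρ)) ≤ toLex (transversalDegree d (k ∘ σ)))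
    (hτσ : transversalDegree d (k ∘ τ) = transversalDegree d (k ∘ σ)) : k ∘ τ = k ∘ σ := by
  have hτ (ρ : Equiv.Perm ι) :
      toLex (transversalDegree d (k ∘ ρ)) ≤ toLex (transversalDegree d (k ∘ τ)) :=
    hτσ ▸ hσ ρ
  by_contra hne
  obtain ⟨p₀, hp₀⟩ := Function.ne_iff.mp hne
  obtain ⟨p, hp, hmin⟩ := Set.exists_min_image {p | k (σ p) ≠ k (τ p)}
    (fun p => d p (k (σ p))) (Set.toFinite _) ⟨p₀, hp₀.symm⟩
  obtain ⟨q, hq, hqp⟩ := exists_lt_of_forall_transversalDegree_le hrow hcol hτ hp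
  obtain ⟨r, hr, hrq⟩ := exists_lt_of_forall_transversalDegree_le hrow hcol hσ hq.symm
  exact (hmin r hr.symm).not_gt (hrq.trans hqp)

end TransversalDegree

section ColoredMatrix

variable {R ι κ α : Type*} [CommRing R] [Fintype ι] [DecidableEq ι]

/-- The matrix `B` with each entry `B p q` multiplied by a variable which depends only on the row
`p` and on the color `k q` of the column `q`. For a Gabor matrix the color of a column is its
translation, `d p x = x - p`, and `B` consists of roots of unity. -/
noncomputable def coloredMatrix (d : ι → κ → α) (k : ι → κ) (B : Matrix ι ι R) :
    Matrix ι ι (MvPolynomial α R) :=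
  Matrix.of fun p q => MvPolynomial.X (d p (k q)) * MvPolynomial.C (B p q)

theorem det_coloredMatrix (d : ι → κ → α) (k : ι → κ) (B : Matrix ι ι R) :
    (coloredMatrix d k B).det = ∑ σ : Equiv.Perm ι,
      Equiv.Perm.sign σ • MvPolynomial.monomial (transversalDegree d (k ∘ σ)) (∏ p, B p (σ p)) := by
  rw [← Matrix.det_transpose, Matrix.det_apply]
  refine Finset.sum_congr rfl fun σ _ => ?_
  rw [transversalDegree, MvPolynomial.monomial_sum_prod]
  congr 1
  refine Finset.prod_congr rfl fun p _ => ?_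
  rw [Matrix.transpose_apply, coloredMatrix, Matrix.of_apply, mul_comm, MvPolynomial.X,
    MvPolynomial.C_mul_monomial, mul_one, Function.comp_apply]

theorem eval_det_coloredMatrix (d : ι → κ → α) (k : ι → κ) (B : Matrix ι ι R) (c : α → R) :
    MvPolynomial.eval c (coloredMatrix d k B).det =
      (Matrix.of fun p q => c (d p (k q)) * B p q).det := by
  rw [RingHom.map_det]
  congr 1
  ext p q
  simp [coloredMatrix]

theorem coeff_det_coloredMatrix [DecidableEq κ] {d : ι → κ → α} {k : ι → κ} {σ : Equiv.Perm ι}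
    (hσ : ∀ τ : Equiv.Perm ι,
      transversalDegree d (k ∘ τ) = transversalDegree d (k ∘ σ) → k ∘ τ = k ∘ σ)
    (B : Matrix ι ι R) :
    (coloredMatrix d k B).det.coeff (transversalDegree d (k ∘ σ)) =
      (Matrix.of fun p q => if k q = k (σ p) then B p q else 0).det := by
  rw [det_coloredMatrix, ← Matrix.det_transpose, Matrix.det_apply, MvPolynomial.coeff_sum]
  refine Finset.sum_congr rfl fun τ _ => ?_
  classical
  rw [MvPolynomial.coeff_smul, MvPolynomial.coeff_monomial]
  congr 1
  simp only [Matrix.transpose_apply, Matrix.of_apply]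
  rw [Finset.prod_ite_zero]
  by_cases hτ : k ∘ τ = k ∘ σ
  · have hcolor (p : ι) : k (τ p) = k (σ p) := congrFun hτ p
    rw [if_pos (congrArg _ hτ), if_pos fun p _ => hcolor p]
  · rw [if_neg fun h => hτ (hσ τ h), if_neg fun h => hτ (funext fun p => h p (Finset.mem_univ p))]

theorem det_colorBlocks [Fintype κ] [LinearOrder κ] (k : ι → κ) (B : Matrix ι ι R) :
    (Matrix.of fun p q => if k q = k p then B p q else 0).det =
      ∏ x, (B.toSquareBlock k x).det := by
  have htriangular : (Matrix.of fun p q => if k q = k p then B p q else 0).BlockTriangular k :=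
    fun p q hpq => if_neg hpq.ne
  rw [htriangular.det_fintype]
  refine Finset.prod_congr rfl fun x _ => congrArg Matrix.det ?_
  ext p q
  exact if_pos (q.2.trans p.2.symm)

theorem det_coloredMatrix_ne_zero [IsDomain R] [Finite κ] [LinearOrder κ] [LinearOrder α]
    {d : ι → κ → α} (hrow : ∀ p, Function.Injective (d p))
    (hcol : ∀ x, Function.Injective fun p => d p x) {k : ι → κ} {B : Matrix ι ι R}
    (hB : ∀ (σ : Equiv.Perm ι) (x : κ), ((B.submatrix σ id).toSquareBlock k x).det ≠ 0) :
    (coloredMatrix d k B).det ≠ 0 := by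
  have := Fintype.ofFinite κ
  obtain ⟨σ, hσ⟩ := Finite.exists_max fun ρ : Equiv.Perm ι => toLex (transversalDegree d (k ∘ ρ))
  have hcoeff := coeff_det_coloredMatrix
    (fun τ => comp_eq_of_forall_transversalDegree_le hrow hcol hσ) B
  have hpermute : (Matrix.of fun p q => if k q = k (σ p) then B p q else 0).det =
      Equiv.Perm.sign σ * ∏ x, ((B.submatrix σ.symm id).toSquareBlock k x).det := by
    rw [← det_colorBlocks k (B.submatrix σ.symm id), ← Matrix.det_permute]
    congr 1
    ext p q
    simp
  intro hdet
  have hsign : IsUnit ((Equiv.Perm.sign σ : ℤ) : R) := (Units.isUnit _).map (Int.castRingHom R)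
  rw [hdet, MvPolynomial.coeff_zero, hpermute, eq_comm, hsign.mul_right_eq_zero] at hcoeff
  exact Finset.prod_ne_zero_iff.mpr (fun x _ => hB σ.symm x) hcoeff

end ColoredMatrix

section Gabor

variable {K : Type*} [Field K] [CharZero K] {L : ℕ} {ω : K}

theorem det_gabor_ne_zero (hL : L.Prime) (hω : IsPrimitiveRoot ω L)
    {f : Fin L → Fin L × Fin L} (hf : Function.Injective f) :
    (coloredMatrix (fun p x => x - p) (fun q => (f q).1)
      (Matrix.of fun p q => ω ^ ((p : ℕ) * ((f q).2 : ℕ)))).det ≠ 0 := by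
  have : NeZero L := ⟨hL.ne_zero⟩
  have hcast : Function.Injective fun i : Fin L => ((i : ℕ) : ZMod L) := fun i j h =>
    Fin.ext (((ZMod.natCast_eq_natCast_iff ..).mp h).eq_of_lt_of_lt i.isLt j.isLt)
  refine det_coloredMatrix_ne_zero (fun p => sub_left_injective) (fun x => sub_right_injective)
    fun σ x => det_pow_mul_ne_zero_of_prime hL hω ?_ ?_
  · exact hcast.comp (σ.injective.comp Subtype.val_injective)
  · exact fun q r hqr => Subtype.ext (hf (Prod.ext (q.2.trans r.2.symm) (hcast hqr)))

theorem stmt12_general [MeasurableSpace K] [MeasurableAdd₂ K] [MeasurableMul₂ K]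
    [MeasurableSingletonClass K] (hL : L.Prime) (hω : IsPrimitiveRoot ω L)
    (μ : Fin L → Measure K) [∀ i, SigmaFinite (μ i)] [∀ i, NullSingletonClass (μ i)] :
    ∀ᵐ c ∂Measure.pi μ, ∀ f : Fin L → Fin L × Fin L, Function.Injective f →
      IsUnit (Matrix.of fun p q : Fin L =>
        c ((f q).1 - p) * ω ^ ((p : ℕ) * ((f q).2 : ℕ))) := by
  refine ae_all_iff.mpr fun f => ae_all_iff.mpr fun hf => ?_
  filter_upwards [ae_mvPolynomial_eval_ne_zero μ (det_gabor_ne_zero hL hω hf)] with c hc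
  rw [Matrix.isUnit_iff_isUnit_det, isUnit_iff_ne_zero]
  simpa only [eval_det_coloredMatrix, Matrix.of_apply] using hc

theorem exp_two_pi_mul_I_mul_mul_div (L p m : ℕ) :
    Complex.exp (2 * (Real.pi : ℂ) * Complex.I * (p : ℂ) * (m : ℂ) / (L : ℂ)) =
      Complex.exp (2 * Real.pi * Complex.I / L) ^ (p * m) := by
  rw [← Complex.exp_nat_mul]
  congr 1
  push_cast
  ring

end Gabor

/-- For prime `L` and Lebesgue-almost every `c ∈ ℂ^L` (extended
`L`-periodically), every `L × L` submatrix of the `L × L²` discrete Gabor matrix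
`[A_c]_{p,(k,m)} = c_{(k−p) mod L} e^{2πi pm/L}` is invertible; an `L × L` submatrix is
specified by an injection `f : Fin L → Fin L × Fin L` selecting `L` distinct columns. -/
theorem stmt12 (L : ℕ) (hL : Nat.Prime L) :
    ∀ᵐ c : Fin L → ℂ ∂volume, ∀ f : Fin L → Fin L × Fin L, Function.Injective f →
      IsUnit (Matrix.of fun p q : Fin L =>
        c ((f q).1 - p) *
          Complex.exp (2 * (Real.pi : ℂ) * Complex.I * ((p : ℕ) : ℂ) *
            (((f q).2 : ℕ) : ℂ) / ((L : ℕ) : ℂ))) := by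
  simpa only [exp_two_pi_mul_I_mul_mul_div, volume_pi] using
    stmt12_general hL (Complex.isPrimitiveRoot_exp L hL.ne_zero) fun _ => volume
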